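/- Let W = [w_ij] be an n×n real symmetric matrix, let ‖W‖ denote its spectral radius (operator norm) and N²[W] = Σ_{1≤i,j≤n} w_ij² its squared Frobenius norm. Then Σ_{i=1}^n (Σ_{j=1}^n w_ij²)^{3/2} ≤ ‖W‖·N²[W] and Σ_{1≤i,j≤n} |w_ij|³ ≤ ‖W‖·N²[W]. Consequently, if λ₁,…,λ_n are the eigenvalues of W, then Σᵢλᵢ⁴/N⁴[W] ≤ ‖W‖²/N²[W] and Σᵢ|λᵢ|³/N³[W] ≤ ‖W‖/N[W]. -/

import Mathlib

/-!
Write `M = sprad W`, and let `sᵢ` be the Euclidean norm of the `i`-th row of `W`.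
By homogeneity the quadratic form of `W` is bounded by `M ∑ vᵢ²` (`abs_quad_le`), and polarization
turns this into `2 x'Wy ≤ M (∑ xᵢ² + ∑ yᵢ²)` (`two_mul_bilin_le`). Taking for `x` the `i`-th row
and for `y` the vector `sᵢ eᵢ` gives `2 sᵢ³ ≤ 2 M sᵢ²`; summing over `i` is the first inequality.
The second follows from the first, because `|wᵢⱼ| ≤ sᵢ` implies `∑ⱼ |wᵢⱼ|³ ≤ sᵢ³`.
For the eigenvalues, `|λᵢ| ≤ M` (the quadratic form at a unit eigenvector) and
`∑ λᵢ² = Tr W² = N²[W]` (diagonalization), so `∑ λᵢ⁴ ≤ M² N²[W]` and `∑ |λᵢ|³ ≤ M N²[W]`;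
it remains to divide.
-/


noncomputable section

/-- The spectral radius (operator norm) of a symmetric real matrix, as the supremum of
`|v'Wv|` over unit vectors `v`. -/
def sprad {ι : Type*} [Fintype ι] (W : Matrix ι ι ℝ) : ℝ :=
  sSup {r : ℝ | ∃ v : ι → ℝ, (∑ i, (v i) ^ 2) = 1 ∧ r = |∑ i, ∑ j, v i * W i j * v j|}

/-- The squared Frobenius norm `N²[W] = ∑ᵢⱼ wᵢⱼ²`. -/
def frob2 {ι : Type*} [Fintype ι] (W : Matrix ι ι ℝ) : ℝ := ∑ i, ∑ j, (W i j) ^ 2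

open Matrix in
lemma quad_eq_dotProduct {ι : Type*} [Fintype ι] (W : Matrix ι ι ℝ) (v : ι → ℝ) :
    ∑ i, ∑ j, v i * W i j * v j = v ⬝ᵥ (W *ᵥ v) := by
  simp [dotProduct, mulVec, Finset.mul_sum, mul_assoc]

/-- The set of values of `|v'Wv|` on the unit sphere is bounded above, so that the supremum in
`sprad` is not a junk value. -/
lemma bddAbove_quad {ι : Type*} [Fintype ι] (W : Matrix ι ι ℝ) :
    BddAbove {r : ℝ | ∃ v : ι → ℝ, (∑ i, (v i) ^ 2) = 1 ∧
      r = |∑ i, ∑ j, v i * W i j * v j|} := by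
  refine ⟨∑ i, ∑ j, |W i j|, ?_⟩
  rintro r ⟨v, hv, rfl⟩
  have h1 : ∀ i, |v i| ≤ 1 := fun i => by
    rw [← sq_le_one_iff_abs_le_one, ← hv]
    exact Finset.single_le_sum (f := fun i => (v i) ^ 2) (fun _ _ => sq_nonneg _)
      (Finset.mem_univ i)
  refine (Finset.abs_sum_le_sum_abs _ _).trans (Finset.sum_le_sum fun i _ => ?_)
  refine (Finset.abs_sum_le_sum_abs _ _).trans (Finset.sum_le_sum fun j _ => ?_)
  rw [abs_mul, abs_mul]
  calc |v i| * |W i j| * |v j| ≤ 1 * |W i j| * 1 := by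
        gcongr
        · exact h1 i
        · exact h1 j
    _ = |W i j| := by ring

lemma sprad_nonneg {ι : Type*} [Fintype ι] (W : Matrix ι ι ℝ) : 0 ≤ sprad W := by
  apply Real.sSup_nonneg
  rintro r ⟨v, -, rfl⟩
  exact abs_nonneg _

open Matrix in
lemma abs_quad_le {ι : Type*} [Fintype ι] (W : Matrix ι ι ℝ) (v : ι → ℝ) :
    |v ⬝ᵥ (W *ᵥ v)| ≤ sprad W * (v ⬝ᵥ v) := by
  have hN : 0 ≤ v ⬝ᵥ v := Finset.sum_nonneg fun i _ => mul_self_nonneg (v i)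
  rcases hN.eq_or_lt with h0 | hpos
  · have : v = 0 := dotProduct_self_eq_zero.1 h0.symm
    simp [this]
  · set c := (Real.sqrt (v ⬝ᵥ v))⁻¹ with hc
    have hc2 : c * c * (v ⬝ᵥ v) = 1 := by
      rw [hc, ← mul_inv, Real.mul_self_sqrt hN, inv_mul_cancel₀ hpos.ne']
    have hmem : |(c • v) ⬝ᵥ (W *ᵥ (c • v))| ≤ sprad W := by
      refine le_csSup (bddAbove_quad W) ⟨c • v, ?_, by rw [quad_eq_dotProduct]⟩
      rw [← hc2]
      simp only [dotProduct, Pi.smul_apply, smul_eq_mul, Finset.mul_sum]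
      exact Finset.sum_congr rfl fun i _ => by ring
    rw [mulVec_smul, smul_dotProduct, dotProduct_smul, smul_eq_mul, smul_eq_mul, ← mul_assoc,
      abs_mul, abs_of_nonneg (mul_self_nonneg c)] at hmem
    calc |v ⬝ᵥ (W *ᵥ v)| = c * c * |v ⬝ᵥ (W *ᵥ v)| * (v ⬝ᵥ v) := by
          linear_combination -|v ⬝ᵥ (W *ᵥ v)| * hc2
      _ ≤ sprad W * (v ⬝ᵥ v) := by gcongr

open Matrix in
/-- The polarized form of `abs_quad_le`; this is where the symmetry of `W` enters. -/
lemma two_mul_bilin_le {ι : Type*} [Fintype ι] (W : Matrix ι ι ℝ) (hW : W.IsHermitian)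
    (x y : ι → ℝ) :
    2 * (x ⬝ᵥ (W *ᵥ y)) ≤ sprad W * (x ⬝ᵥ x + y ⬝ᵥ y) := by
  have hsymm : y ⬝ᵥ (W *ᵥ x) = x ⬝ᵥ (W *ᵥ y) := by
    have hT : Wᵀ = W := by simpa [IsHermitian, conjTranspose_eq_transpose_of_trivial] using hW
    rw [dotProduct_mulVec, ← mulVec_transpose, hT, dotProduct_comm]
  have h1 := (abs_le.1 (abs_quad_le W (x + y))).2
  have h2 := (abs_le.1 (abs_quad_le W (x - y))).1
  simp only [mulVec_add, mulVec_sub, add_dotProduct, dotProduct_add, sub_dotProduct,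
    dotProduct_sub, hsymm, dotProduct_comm y x] at h1 h2
  linarith

open Matrix in
lemma row_rpow_le {ι : Type*} [Fintype ι] [DecidableEq ι] (W : Matrix ι ι ℝ)
    (hW : W.IsHermitian) (i : ι) :
    (∑ j, (W i j) ^ 2) ^ (3 / 2 : ℝ) ≤ sprad W * ∑ j, (W i j) ^ 2 := by
  set S := ∑ j, (W i j) ^ 2 with hS
  have hS0 : 0 ≤ S := Finset.sum_nonneg fun j _ => sq_nonneg _
  have hpow : S ^ (3 / 2 : ℝ) = Real.sqrt S * S := by
    rw [show (3 / 2 : ℝ) = 1 / 2 + 1 by norm_num, Real.rpow_add_of_nonneg hS0 (by norm_num)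
      (by norm_num), Real.rpow_one, Real.sqrt_eq_rpow]
  have hrow : W i ⬝ᵥ W i = S := by
    simp only [dotProduct, hS, sq]
  have hbil : W i ⬝ᵥ (W *ᵥ Pi.single i (Real.sqrt S)) = Real.sqrt S * S := by
    rw [← hrow]
    simp only [dotProduct, mulVec_single, Finset.mul_sum]
    refine Finset.sum_congr rfl fun j _ => ?_
    have : W j i = W i j := by simpa using hW.apply i j
    simp [this]
    ring
  have hy : (Pi.single i (Real.sqrt S) : ι → ℝ) ⬝ᵥ Pi.single i (Real.sqrt S) = S := by
    simp [Real.mul_self_sqrt hS0]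
  have := two_mul_bilin_le W hW (W i) (Pi.single i (Real.sqrt S))
  rw [hbil, hrow, hy] at this
  rw [hpow]
  linarith

lemma sum_abs_cube_le {ι : Type*} [Fintype ι] (a : ι → ℝ) :
    ∑ j, |a j| ^ 3 ≤ (∑ j, (a j) ^ 2) ^ (3 / 2 : ℝ) := by
  set S := ∑ j, (a j) ^ 2 with hS
  have hS0 : 0 ≤ S := Finset.sum_nonneg fun j _ => sq_nonneg _
  rw [show (3 / 2 : ℝ) = 1 / 2 + 1 by norm_num, Real.rpow_add_of_nonneg hS0 (by norm_num)
      (by norm_num), Real.rpow_one, ← Real.sqrt_eq_rpow]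
  conv_rhs => rw [hS, Finset.mul_sum]
  refine Finset.sum_le_sum fun j _ => ?_
  have hj : |a j| ≤ Real.sqrt S := Real.abs_le_sqrt
    (Finset.single_le_sum (f := fun j => (a j) ^ 2) (fun _ _ => sq_nonneg _) (Finset.mem_univ j))
  rw [pow_succ', sq_abs]
  gcongr

open Matrix in
lemma abs_eigenvalues_le {ι : Type*} [Fintype ι] [DecidableEq ι] (W : Matrix ι ι ℝ)
    (hW : W.IsHermitian) (i : ι) : |hW.eigenvalues i| ≤ sprad W := by
  have hu : (hW.eigenvectorBasis i : ι → ℝ) ⬝ᵥ (hW.eigenvectorBasis i : ι → ℝ) = 1 := by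
    have h := hW.eigenvectorBasis.orthonormal.1 i
    have h2 := EuclideanSpace.real_norm_sq_eq (hW.eigenvectorBasis i)
    rw [h] at h2
    simp only [dotProduct, ← sq]
    linarith
  have h := abs_quad_le W (hW.eigenvectorBasis i : ι → ℝ)
  rwa [hW.mulVec_eigenvectorBasis, dotProduct_smul, hu, smul_eq_mul, mul_one, mul_one] at h

open Matrix in
lemma sum_eigenvalues_sq {ι : Type*} [Fintype ι] [DecidableEq ι] (W : Matrix ι ι ℝ)
    (hW : W.IsHermitian) : ∑ i, (hW.eigenvalues i) ^ 2 = frob2 W := by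
  have h1 : frob2 W = (W * W).trace := by
    simp only [frob2, trace, diag_apply, mul_apply]
    refine Finset.sum_congr rfl fun i _ => Finset.sum_congr rfl fun j _ => ?_
    have : W j i = W i j := by simpa using hW.apply i j
    rw [this, sq]
  have h2 : W * W = Unitary.conjStarAlgAut ℝ _ hW.eigenvectorUnitary
      (diagonal fun i => (hW.eigenvalues i) ^ 2) := by
    conv_lhs => rw [hW.spectral_theorem, ← map_mul, diagonal_mul_diagonal]
    simp [sq]
  rw [h1, h2, Unitary.conjStarAlgAut_apply, trace_mul_comm, ← mul_assoc]
  simp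

/-- elementary bounds used in the Berry–Esseen step.
For a real symmetric `n×n` matrix `W` with spectral radius `‖W‖ = sprad W` and squared
Frobenius norm `N²[W] = frob2 W`:
`∑ᵢ (∑ⱼ wᵢⱼ²)^{3/2} ≤ ‖W‖ N²[W]`, `∑ᵢⱼ |wᵢⱼ|³ ≤ ‖W‖ N²[W]`, and for the eigenvalues
`λᵢ` of `W`, `∑ᵢλᵢ⁴/N⁴[W] ≤ ‖W‖²/N²[W]` and `∑ᵢ|λᵢ|³/N³[W] ≤ ‖W‖/N[W]`. -/
theorem stmt17 {n : ℕ} (W : Matrix (Fin n) (Fin n) ℝ) (hW : W.IsHermitian) :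
    (∑ i, (∑ j, (W i j) ^ 2) ^ (3 / 2 : ℝ)) ≤ sprad W * frob2 W ∧
    (∑ i, ∑ j, |W i j| ^ 3) ≤ sprad W * frob2 W ∧
    (∑ i, (hW.eigenvalues i) ^ 4) / (frob2 W) ^ 2 ≤ (sprad W) ^ 2 / frob2 W ∧
    (∑ i, |hW.eigenvalues i| ^ 3) / (Real.sqrt (frob2 W)) ^ 3
      ≤ sprad W / Real.sqrt (frob2 W) := by
  have hM := sprad_nonneg W
  have hF : 0 ≤ frob2 W := Finset.sum_nonneg fun i _ => Finset.sum_nonneg fun j _ => sq_nonneg _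
  have hrows : (∑ i, (∑ j, (W i j) ^ 2) ^ (3 / 2 : ℝ)) ≤ sprad W * frob2 W := by
    rw [frob2, Finset.mul_sum]
    exact Finset.sum_le_sum fun i _ => row_rpow_le W hW i
  have h4 : ∑ i, (hW.eigenvalues i) ^ 4 ≤ (sprad W) ^ 2 * frob2 W := by
    rw [← sum_eigenvalues_sq W hW, Finset.mul_sum]
    refine Finset.sum_le_sum fun i _ => ?_
    have := sq_le_sq' (abs_le.1 (abs_eigenvalues_le W hW i)).1
      (abs_le.1 (abs_eigenvalues_le W hW i)).2
    calc (hW.eigenvalues i) ^ 4 = (hW.eigenvalues i) ^ 2 * (hW.eigenvalues i) ^ 2 := by ring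
      _ ≤ _ := by gcongr
  have h3 : ∑ i, |hW.eigenvalues i| ^ 3 ≤ sprad W * frob2 W := by
    rw [← sum_eigenvalues_sq W hW, Finset.mul_sum]
    refine Finset.sum_le_sum fun i _ => ?_
    rw [pow_succ', sq_abs]
    exact mul_le_mul_of_nonneg_right (abs_eigenvalues_le W hW i) (sq_nonneg _)
  refine ⟨hrows, (Finset.sum_le_sum fun i _ => sum_abs_cube_le (W i)).trans hrows, ?_⟩
  rcases hF.eq_or_lt with h0 | hpos
  -- For `W = 0` all four quotients are divisions by zero, equal to `0` by convention.
  · simp [← h0]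
  · have hs : 0 < Real.sqrt (frob2 W) := Real.sqrt_pos.2 hpos
    constructor
    · rw [div_le_div_iff₀ (by positivity) hpos]
      calc _ ≤ (sprad W) ^ 2 * frob2 W * frob2 W := by gcongr
        _ = _ := by ring
    · rw [div_le_div_iff₀ (by positivity) hs]
      calc _ ≤ sprad W * frob2 W * Real.sqrt (frob2 W) := by gcongr
        _ = sprad W * (Real.sqrt (frob2 W)) ^ 3 := by
          rw [pow_succ, Real.sq_sqrt hF]
          ring
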